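/- Let c : ℝ × E → E be a C² vector field such that the associated form field C(t, x) := ⟪c(t, x), ·⟫ is moving with the fluid, i.e. ∂C/∂t + D_x C (u) + C ∘ D_x u = 0, and let ρ : ℝ × E → ℝ be a C¹ positive function satisfying the continuity equation ∂ρ/∂t + D_x ρ (u) + ρ · div u = 0. Then the vector field J(t, x) := (1/ρ(t, x)) · curl c(t, x) is moving with the fluid, i.e. ∂J/∂t(t, x) + D_x J(t, x)(u(t, x)) − D_x u(t, x)(J(t, x)) = 0 for all (t, x). -/

import Mathlib

noncomputable section

local notation "E3" => EuclideanSpace ℝ (Fin 3)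

/-- divergence of a vector field: trace of its Fréchet derivative. -/
def divv (w : E3 → E3) (x : E3) : ℝ :=
  LinearMap.trace ℝ E3 (fderiv ℝ w x : E3 →ₗ[ℝ] E3)

/-- the curl of a vector field on `EuclideanSpace ℝ (Fin 3)`, componentwise in
the standard orthonormal basis. -/
def curlE (w : E3 → E3) (x : E3) : E3 :=
  (WithLp.equiv 2 (Fin 3 → ℝ)).symm
    ![fderiv ℝ w x (EuclideanSpace.single 1 1) 2 - fderiv ℝ w x (EuclideanSpace.single 2 1) 1,
      fderiv ℝ w x (EuclideanSpace.single 2 1) 0 - fderiv ℝ w x (EuclideanSpace.single 0 1) 2,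
      fderiv ℝ w x (EuclideanSpace.single 0 1) 1 - fderiv ℝ w x (EuclideanSpace.single 1 1) 0]

/-!
Differentiating the transport equation `D_t C + C ∘ L = 0`, `L = D_x u`, in space gives
`D_t (D_x C) + (D_x C)(L·, ·) + (D_x C)(·, L·) = -C ∘ D_x² u`, whose right-hand side is symmetric.
The antisymmetric part of `D_x C` is `det(ω, ·, ·)` with `ω = curl c`, and
`det(Lω, w, v) + det(ω, Lw, v) + det(ω, w, Lv) = tr L · det(ω, w, v)`, so antisymmetrizing yields
the vorticity equation `D_t ω + (div u) ω = L ω`. Dividing by `ρ` absorbs the term `(div u) ω`,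
because `D_t ρ = -ρ div u`.
-/

open Function (uncurry)
open scoped Matrix
open ContinuousLinearMap (inl inr)

section MaterialDerivative

variable {E F G : Type*} [NormedAddCommGroup E] [NormedSpace ℝ E]
  [NormedAddCommGroup F] [NormedSpace ℝ F] [NormedAddCommGroup G] [NormedSpace ℝ G]

theorem differentiable_fderiv_of_contDiff_two {g : E → F} (hg : ContDiff ℝ 2 g) :
    Differentiable ℝ (fderiv ℝ g) :=
  (hg.fderiv_right (m := 1) (by norm_num)).differentiable one_ne_zero

/-- The material derivative `∂f/∂t + D_x f (u)` of a time-dependent field `f` along the flow of the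
time-dependent velocity field `u`. -/
def materialDeriv (u : ℝ → E → E) (f : ℝ → E → F) (t : ℝ) (x : E) : F :=
  deriv (fun τ => f τ x) t + fderiv ℝ (f t) x (u t x)

variable {u : ℝ → E → E} {f : ℝ → E → F} {t : ℝ} {x : E}

theorem hasFDerivAt_slice {f' : ℝ × E →L[ℝ] F} (hf : HasFDerivAt (uncurry f) f' (t, x)) :
    HasFDerivAt (f t) (f' ∘L inr ℝ ℝ E) x :=
  hf.comp x (hasFDerivAt_prodMk_right t x)

theorem materialDeriv_eq_of_hasFDerivAt {f' : ℝ × E →L[ℝ] F}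
    (hf : HasFDerivAt (uncurry f) f' (t, x)) : materialDeriv u f t x = f' (1, u t x) := by
  have htime : HasFDerivAt (fun τ => f τ x) (f' ∘L inl ℝ ℝ E) t :=
    HasFDerivAt.comp (f := fun τ => (τ, x)) t hf (hasFDerivAt_prodMk_left t x)
  rw [materialDeriv, htime.hasDerivAt.deriv, (hasFDerivAt_slice hf).fderiv]
  simp [← map_add]

theorem materialDeriv_clm_apply (L : F →L[ℝ] G) (hf : DifferentiableAt ℝ (uncurry f) (t, x)) :
    materialDeriv u (fun τ y => L (f τ y)) t x = L (materialDeriv u f t x) := by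
  have hLf : HasFDerivAt (uncurry fun τ y => L (f τ y)) (L ∘L fderiv ℝ (uncurry f) (t, x)) (t, x) :=
    L.hasFDerivAt.comp (t, x) hf.hasFDerivAt
  rw [materialDeriv_eq_of_hasFDerivAt hLf, materialDeriv_eq_of_hasFDerivAt hf.hasFDerivAt]
  rfl

theorem materialDeriv_inv_smul {ρ : ℝ → E → ℝ} (hρ : DifferentiableAt ℝ (uncurry ρ) (t, x))
    (hρ0 : ρ t x ≠ 0) (hf : DifferentiableAt ℝ (uncurry f) (t, x)) :
    materialDeriv u (fun τ y => (ρ τ y)⁻¹ • f τ y) t x =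
      (ρ t x)⁻¹ • materialDeriv u f t x - ((ρ t x ^ 2)⁻¹ * materialDeriv u ρ t x) • f t x := by
  have hquot : HasFDerivAt (uncurry fun τ y => (ρ τ y)⁻¹ • f τ y) _ (t, x) :=
    ((hasDerivAt_inv hρ0).comp_hasFDerivAt (t, x) hρ.hasFDerivAt).smul hf.hasFDerivAt
  rw [materialDeriv_eq_of_hasFDerivAt hquot, materialDeriv_eq_of_hasFDerivAt hf.hasFDerivAt,
    materialDeriv_eq_of_hasFDerivAt hρ.hasFDerivAt]
  simp [uncurry, sub_eq_add_neg]

theorem materialDeriv_inv_smul_of_continuity {ρ : ℝ → E → ℝ} {δ : ℝ}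
    (hρ : DifferentiableAt ℝ (uncurry ρ) (t, x)) (hρ0 : ρ t x ≠ 0)
    (hcont : materialDeriv u ρ t x + ρ t x * δ = 0) (hf : DifferentiableAt ℝ (uncurry f) (t, x)) :
    materialDeriv u (fun τ y => (ρ τ y)⁻¹ • f τ y) t x =
      (ρ t x)⁻¹ • (materialDeriv u f t x + δ • f t x) := by
  rw [materialDeriv_inv_smul hρ hρ0 hf, eq_neg_of_add_eq_zero_left hcont]
  match_scalars <;> field_simp

theorem hasFDerivAt_uncurry_fderiv (hf : ContDiff ℝ 2 (uncurry f)) (t : ℝ) (x : E) :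
    HasFDerivAt (uncurry fun τ => fderiv ℝ (f τ))
      ((ContinuousLinearMap.compL ℝ E (ℝ × E) F).flip (inr ℝ ℝ E) ∘L
        fderiv ℝ (fderiv ℝ (uncurry f)) (t, x)) (t, x) := by
  have hDf : Differentiable ℝ (fderiv ℝ (uncurry f)) := differentiable_fderiv_of_contDiff_two hf
  have hslice : (uncurry fun τ => fderiv ℝ (f τ)) = fun p => fderiv ℝ (uncurry f) p ∘L inr ℝ ℝ E :=
    funext fun p => (hasFDerivAt_slice (hf.differentiable two_ne_zero p).hasFDerivAt).fderiv
  rw [hslice]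
  exact ((ContinuousLinearMap.compL ℝ E (ℝ × E) F).flip (inr ℝ ℝ E)).hasFDerivAt.comp (t, x)
    (hDf (t, x)).hasFDerivAt

theorem hasFDerivAt_materialDeriv (hf : ContDiff ℝ 2 (uncurry f))
    (hu : DifferentiableAt ℝ (u t) x) :
    HasFDerivAt (materialDeriv u f t)
      (materialDeriv u (fun τ => fderiv ℝ (f τ)) t x + fderiv ℝ (f t) x ∘L fderiv ℝ (u t) x) x := by
  have hf1 : Differentiable ℝ (uncurry f) := hf.differentiable two_ne_zero
  have hDf : Differentiable ℝ (fderiv ℝ (uncurry f)) := differentiable_fderiv_of_contDiff_two hf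
  have hsymm : IsSymmSndFDerivAt ℝ (uncurry f) (t, x) := hf.contDiffAt.isSymmSndFDerivAt (by simp)
  have hmat : materialDeriv u f t = fun y => fderiv ℝ (uncurry f) (t, y) (1, u t y) :=
    funext fun y => materialDeriv_eq_of_hasFDerivAt (hf1 (t, y)).hasFDerivAt
  have hDf_slice := (hDf (t, x)).hasFDerivAt.comp x (hasFDerivAt_prodMk_right t x)
  have hvel := (hasFDerivAt_const (1 : ℝ) x).prodMk hu.hasFDerivAt
  rw [hmat]
  refine (hDf_slice.clm_apply hvel).congr_fderiv ?_
  ext w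
  rw [materialDeriv_eq_of_hasFDerivAt (hasFDerivAt_uncurry_fderiv hf t x),
    (hasFDerivAt_slice (hf1 (t, x)).hasFDerivAt).fderiv]
  simp [hsymm.eq (0, w), add_comm]

/-- The infinitesimal action `B(L·, ·) + B(·, L·)` of an endomorphism `L` on a bilinear form `B`;
with `L = D_x u` it is the zeroth-order part of the Lie derivative of `B` along `u`. -/
def bilinAction (L : E →L[ℝ] E) (B : E →L[ℝ] E →L[ℝ] F) : E →L[ℝ] E →L[ℝ] F :=
  B.bilinearComp L (.id ℝ E) + B.bilinearComp (.id ℝ E) L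

/-- Transport commutes with the exterior derivative: the antisymmetric part of the form below is the
transport operator applied to `dC`. -/
theorem materialDeriv_fderiv_add_bilinAction_symm {C : ℝ → E → E →L[ℝ] F}
    (hC : ContDiff ℝ 2 (uncurry C)) (hu : ContDiff ℝ 2 (u t))
    (htransport : ∀ y, materialDeriv u C t y + C t y ∘L fderiv ℝ (u t) y = 0) (w v : E) :
    (materialDeriv u (fun τ => fderiv ℝ (C τ)) t x
        + bilinAction (fderiv ℝ (u t) x) (fderiv ℝ (C t) x)) w v
      = (materialDeriv u (fun τ => fderiv ℝ (C τ)) t x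
        + bilinAction (fderiv ℝ (u t) x) (fderiv ℝ (C t) x)) v w := by
  have hDu : DifferentiableAt ℝ (fderiv ℝ (u t)) x :=
    differentiable_fderiv_of_contDiff_two hu x
  have hCt := hasFDerivAt_slice (hC.differentiable two_ne_zero (t, x)).hasFDerivAt
  have hsymm : IsSymmSndFDerivAt ℝ (u t) x := hu.contDiffAt.isSymmSndFDerivAt (by simp)
  have hmat := hasFDerivAt_materialDeriv hC (hu.differentiable two_ne_zero x)
  have hzero := (hmat.add (hCt.differentiableAt.hasFDerivAt.clm_comp hDu.hasFDerivAt)).unique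
    ((hasFDerivAt_const (0 : E →L[ℝ] F) x).congr_of_eventuallyEq (.of_forall htransport))
  have hhess (a b : E) : (materialDeriv u (fun τ => fderiv ℝ (C τ)) t x
      + bilinAction (fderiv ℝ (u t) x) (fderiv ℝ (C t) x)) a b
      = -C t x (fderiv ℝ (fderiv ℝ (u t)) x a b) := by
    have hab := DFunLike.congr_fun (DFunLike.congr_fun hzero a) b
    simp only [add_apply, ContinuousLinearMap.comp_apply, ContinuousLinearMap.compL_apply,
      ContinuousLinearMap.flip_apply, zero_apply] at hab
    simp only [bilinAction, add_apply, ContinuousLinearMap.bilinearComp_apply,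
      ContinuousLinearMap.id_apply]
    rw [eq_neg_iff_add_eq_zero, ← hab]
    abel
  rw [hhess, hhess, hsymm.eq]

end MaterialDerivative

theorem sum_det_update_apply_eq_trace_mul_det {ι R M : Type*} [Fintype ι] [DecidableEq ι]
    [CommRing R] [AddCommGroup M] [Module R M] (b : Module.Basis ι R M) (f : M →ₗ[R] M)
    (v : ι → M) :
    ∑ i, b.det (Function.update v i (f (v i))) = LinearMap.trace R M f * b.det v := by
  have hcol (i : ι) : b.repr (f (v i)) = LinearMap.toMatrix b b f *ᵥ (b.toMatrix v).col i :=
    (LinearMap.toMatrix_mulVec_repr b b f (v i)).symm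
  calc ∑ i, b.det (Function.update v i (f (v i)))
      = ∑ i, ((b.toMatrix v).updateCol i (LinearMap.toMatrix b b f *ᵥ (b.toMatrix v).col i)).det :=
        Finset.sum_congr rfl fun i _ => by rw [b.det_apply, b.toMatrix_update, hcol]
    _ = ((b.toMatrix v).adjugate * (LinearMap.toMatrix b b f * b.toMatrix v)).trace :=
        Finset.sum_congr rfl fun i _ => by
          rw [← Matrix.cramer_apply, Matrix.cramer_eq_adjugate_mulVec]
          rfl
    _ = LinearMap.trace R M f * b.det v := by
        rw [Matrix.trace_mul_comm, Matrix.mul_assoc, Matrix.mul_adjugate, Matrix.mul_smul,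
          Matrix.mul_one, Matrix.trace_smul, ← LinearMap.trace_eq_matrix_trace, b.det_apply,
          smul_eq_mul, mul_comm]

/-- The standard volume form on `ℝ³`. -/
abbrev stdDet : E3 [⋀^Fin 3]→ₗ[ℝ] ℝ := (EuclideanSpace.basisFun (Fin 3) ℝ).toBasis.det

theorem stdDet_apply (a b c : E3) : stdDet ![a, b, c] =
    a 0 * (b 1 * c 2 - b 2 * c 1) + a 1 * (b 2 * c 0 - b 0 * c 2)
      + a 2 * (b 0 * c 1 - b 1 * c 0) := by
  simp only [stdDet, Module.Basis.det_apply, Matrix.det_fin_three, Module.Basis.toMatrix_apply,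
    Matrix.cons_val, OrthonormalBasis.coe_toBasis_repr_apply, EuclideanSpace.basisFun_repr]
  ring

theorem eq_of_stdDet_eq {a b : E3} (h : ∀ w v, stdDet ![a, w, v] = stdDet ![b, w, v]) : a = b := by
  have h0 := h (EuclideanSpace.single 1 1) (EuclideanSpace.single 2 1)
  have h1 := h (EuclideanSpace.single 2 1) (EuclideanSpace.single 0 1)
  have h2 := h (EuclideanSpace.single 0 1) (EuclideanSpace.single 1 1)
  simp only [stdDet_apply] at h0 h1 h2
  ext i
  fin_cases i <;> simp_all

theorem stdDet_derivation_eq_trace_mul (L : E3 →ₗ[ℝ] E3) (a w v : E3) :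
    stdDet ![L a, w, v] + stdDet ![a, L w, v] + stdDet ![a, w, L v] =
      LinearMap.trace ℝ E3 L * stdDet ![a, w, v] := by
  have h := sum_det_update_apply_eq_trace_mul_det (EuclideanSpace.basisFun (Fin 3) ℝ).toBasis L
    ![a, w, v]
  rw [Fin.sum_univ_three] at h
  convert h using 4 <;> ext i <;> fin_cases i <;> rfl

/-- The vector `ω` that represents the antisymmetric part of a bilinear form `B` on `ℝ³`, in the
sense that `B w v - B v w = det(ω, w, v)`; the curl of `c` is the axial vector of `D⟪c, ·⟫`. -/
def axialVector : (E3 →L[ℝ] E3 →L[ℝ] ℝ) →L[ℝ] E3 :=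
  LinearMap.toContinuousLinearMap
    { toFun (B : E3 →L[ℝ] E3 →L[ℝ] ℝ) := (!₂[
        B (EuclideanSpace.single 1 1) (EuclideanSpace.single 2 1)
          - B (EuclideanSpace.single 2 1) (EuclideanSpace.single 1 1),
        B (EuclideanSpace.single 2 1) (EuclideanSpace.single 0 1)
          - B (EuclideanSpace.single 0 1) (EuclideanSpace.single 2 1),
        B (EuclideanSpace.single 0 1) (EuclideanSpace.single 1 1)
          - B (EuclideanSpace.single 1 1) (EuclideanSpace.single 0 1)] : E3)
      map_add' A B := by ext i; fin_cases i <;> simp [add_sub_add_comm]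
      map_smul' r B := by ext i; fin_cases i <;> simp [mul_sub] }

theorem stdDet_axialVector (B : E3 →L[ℝ] E3 →L[ℝ] ℝ) (w v : E3) :
    stdDet ![axialVector B, w, v] = B w v - B v w := by
  have hexp (z : E3) : z = ∑ i, z i • EuclideanSpace.single i (1 : ℝ) := by
    simpa using ((EuclideanSpace.basisFun (Fin 3) ℝ).sum_repr z).symm
  conv_rhs => rw [hexp w, hexp v]
  simp only [stdDet_apply, axialVector, LinearMap.coe_toContinuousLinearMap', LinearMap.coe_mk,
    AddHom.coe_mk, Matrix.cons_val, Fin.sum_univ_three, map_add, map_smul, add_apply, smul_apply,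
    smul_eq_mul]
  ring

theorem axialVector_eq_zero_of_symm {B : E3 →L[ℝ] E3 →L[ℝ] ℝ} (hB : ∀ w v, B w v = B v w) :
    axialVector B = 0 :=
  eq_of_stdDet_eq fun w v => by
    rw [stdDet_axialVector, hB, sub_self, stdDet.map_coord_zero 0 rfl]

theorem axialVector_bilinAction (L : E3 →L[ℝ] E3) (B : E3 →L[ℝ] E3 →L[ℝ] ℝ) :
    axialVector (bilinAction L B) =
      LinearMap.trace ℝ E3 (L : E3 →ₗ[ℝ] E3) • axialVector B - L (axialVector B) := by
  refine eq_sub_of_add_eq (eq_of_stdDet_eq fun w v => ?_)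
  have htrace := stdDet_derivation_eq_trace_mul (L : E3 →ₗ[ℝ] E3) (axialVector B) w v
  rw [AlternatingMap.map_vecCons_add, AlternatingMap.map_vecCons_smul, smul_eq_mul, ← htrace]
  simp only [stdDet_axialVector, bilinAction, add_apply, ContinuousLinearMap.bilinearComp_apply,
    ContinuousLinearMap.id_apply, ContinuousLinearMap.coe_coe]
  ring

section FormField

variable {E : Type*} [NormedAddCommGroup E] [InnerProductSpace ℝ E]

/-- The form field `⟪c, ·⟫` associated with a vector field `c`. -/
abbrev formField (c : E → E) (x : E) : E →L[ℝ] ℝ := innerSL ℝ (c x)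

theorem contDiff_uncurry_formField {c : ℝ → E → E} {n : WithTop ℕ∞}
    (hc : ContDiff ℝ n (uncurry c)) : ContDiff ℝ n (uncurry fun t => formField (c t)) :=
  (innerSL ℝ : E →L[ℝ] E →L[ℝ] ℝ).contDiff.comp hc

theorem fderiv_formField_apply {c : E → E} {x : E} (hc : DifferentiableAt ℝ c x) (w v : E) :
    fderiv ℝ (formField c) x w v = inner ℝ (fderiv ℝ c x w) v := by
  have hform : HasFDerivAt (formField c) ((innerSL ℝ : E →L[ℝ] E →L[ℝ] ℝ) ∘L fderiv ℝ c x) x :=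
    (innerSL ℝ : E →L[ℝ] E →L[ℝ] ℝ).hasFDerivAt.comp x hc.hasFDerivAt
  rw [hform.fderiv]
  rfl

end FormField

theorem curlE_eq_axialVector {c : E3 → E3} {x : E3} (hc : DifferentiableAt ℝ c x) :
    curlE c x = axialVector (fderiv ℝ (formField c) x) := by
  ext i
  fin_cases i <;>
    simp [curlE, axialVector, fderiv_formField_apply hc, EuclideanSpace.inner_single_right]

section Curl

variable {u c : ℝ → E3 → E3} {t : ℝ} {x : E3}

theorem curlE_eq_axialVector_of_differentiable (hc : Differentiable ℝ (uncurry c)) :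
    (fun t => curlE (c t)) = fun t x => axialVector (fderiv ℝ (formField (c t)) x) :=
  funext₂ fun t x =>
    curlE_eq_axialVector (hasFDerivAt_slice (hc (t, x)).hasFDerivAt).differentiableAt

theorem differentiable_uncurry_curlE (hc : ContDiff ℝ 2 (uncurry c)) :
    Differentiable ℝ (uncurry fun t => curlE (c t)) := by
  rw [curlE_eq_axialVector_of_differentiable (hc.differentiable two_ne_zero)]
  exact axialVector.differentiable.comp fun p : ℝ × E3 =>
    (hasFDerivAt_uncurry_fderiv (contDiff_uncurry_formField hc) p.1 p.2).differentiableAt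

theorem materialDeriv_curlE_add_divv_smul (hu : ContDiff ℝ 2 (u t)) (hc : ContDiff ℝ 2 (uncurry c))
    (htransport : ∀ y, materialDeriv u (fun τ => formField (c τ)) t y
      + formField (c t) y ∘L fderiv ℝ (u t) y = 0) :
    materialDeriv u (fun τ => curlE (c τ)) t x + divv (u t) x • curlE (c t) x =
      fderiv ℝ (u t) x (curlE (c t) x) := by
  have hC := contDiff_uncurry_formField hc
  have hcurl := curlE_eq_axialVector_of_differentiable (hc.differentiable two_ne_zero)
  have haxial := axialVector_eq_zero_of_symm
    (materialDeriv_fderiv_add_bilinAction_symm (x := x) hC hu htransport)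
  rw [map_add, axialVector_bilinAction, ← materialDeriv_clm_apply axialVector
    (hasFDerivAt_uncurry_fderiv hC t x).differentiableAt, ← hcurl, ← congr_fun₂ hcurl t x,
    ← add_sub_assoc] at haxial
  exact sub_eq_zero.1 haxial

end Curl

theorem curl_over_density_is_transported_general
    (u : ℝ → E3 → E3)
    (hu : ∀ t, ContDiff ℝ 2 (u t))
    (c : ℝ → E3 → E3)
    (hc : ContDiff ℝ 2 (uncurry c))
    (hcLie : ∀ t x, materialDeriv u (fun τ => formField (c τ)) t x
        + formField (c t) x ∘L fderiv ℝ (u t) x = 0)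
    (ρ : ℝ → E3 → ℝ)
    (hρ : Differentiable ℝ (uncurry ρ))
    (hρ0 : ∀ t x, ρ t x ≠ 0)
    (hρcont : ∀ t x, materialDeriv u ρ t x + ρ t x * divv (u t) x = 0) (t : ℝ) (x : E3) :
    materialDeriv u (fun τ y => (ρ τ y)⁻¹ • curlE (c τ) y) t x
      - fderiv ℝ (u t) x ((ρ t x)⁻¹ • curlE (c t) x) = 0 := by
  rw [sub_eq_zero]
  calc materialDeriv u (fun τ y => (ρ τ y)⁻¹ • curlE (c τ) y) t x
      = (ρ t x)⁻¹ • (materialDeriv u (fun τ => curlE (c τ)) t x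
          + divv (u t) x • curlE (c t) x) :=
        materialDeriv_inv_smul_of_continuity (hρ (t, x)) (hρ0 t x) (hρcont t x)
          (differentiable_uncurry_curlE hc (t, x))
    _ = (ρ t x)⁻¹ • fderiv ℝ (u t) x (curlE (c t) x) := by
        rw [materialDeriv_curlE_add_divv_smul (hu t) hc (hcLie t)]
    _ = fderiv ℝ (u t) x ((ρ t x)⁻¹ • curlE (c t) x) := (map_smul _ _ _).symm

/-- If the form field `⟪c, ·⟫` is moving with the fluid and `ρ`
satisfies the continuity equation, then `(1/ρ) curl c` is a vector field moving
with the fluid. -/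
theorem curl_over_density_is_transported
    (u : ℝ → E3 → E3)
    (hu : ContDiff ℝ (⊤ : ℕ∞) (Function.uncurry u))
    (c : ℝ → E3 → E3)
    (hc : ContDiff ℝ 2 (Function.uncurry c))
    (hcLie : ∀ t x, deriv (fun τ => (innerSL ℝ (c τ x) : E3 →L[ℝ] ℝ)) t
        + fderiv ℝ (fun y => (innerSL ℝ (c t y) : E3 →L[ℝ] ℝ)) x (u t x)
        + (innerSL ℝ (c t x) : E3 →L[ℝ] ℝ).comp (fderiv ℝ (u t) x) = 0)
    (ρ : ℝ → E3 → ℝ)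
    (hρ : ContDiff ℝ 1 (Function.uncurry ρ))
    (hρpos : ∀ t x, 0 < ρ t x)
    (hρcont : ∀ t x, deriv (fun τ => ρ τ x) t + fderiv ℝ (ρ t) x (u t x)
        + ρ t x * divv (u t) x = 0) :
    ∀ t x, deriv (fun τ => (ρ τ x)⁻¹ • curlE (c τ) x) t
        + fderiv ℝ (fun y => (ρ t y)⁻¹ • curlE (c t) y) x (u t x)
        - fderiv ℝ (u t) x ((ρ t x)⁻¹ • curlE (c t) x) = 0 := by
  exact curl_over_density_is_transported_general u
    (fun t => (contDiff_infty.1 hu 2).comp (contDiff_prodMk_right t)) c hc hcLie ρ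
    (hρ.differentiable one_ne_zero) (fun t x => (hρpos t x).ne') hρcont
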